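/- Setting Q = 1, the generating function of plane partitions by size is the MacMahon function: ∑_π q^{|π|} = ∏_{n=1}^∞ (1 - q^n)^{-n}. -/

import Mathlib

/-- A plane partition: an array of non-negative integers, weakly decreasing along
rows and columns, with finite support (hence finite total size). -/
structure PlanePartition where
  part : ℕ → ℕ → ℕ
  row_antitone : ∀ i j, part (i + 1) j ≤ part i j
  col_antitone : ∀ i j, part i (j + 1) ≤ part i j
  support_finite : (Function.support fun ij : ℕ × ℕ => part ij.1 ij.2).Finite

/-- `|π|`: the total number of cubes of the plane partition. -/
noncomputable def PlanePartition.size (π : PlanePartition) : ℕ :=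
  ∑ᶠ ij : ℕ × ℕ, π.part ij.1 ij.2

/-- `|π(0)|`: the size of the main diagonal partition of a plane partition. -/
noncomputable def PlanePartition.diagSize (π : PlanePartition) : ℕ :=
  ∑ᶠ i : ℕ, π.part i i

/-!
The diagonals of a plane partition, read outwards from the main diagonal `μ`, form two chains of
successively interlacing partitions starting at `μ`. Weighted by the sizes of its members, such a
chain is a term of a Schur polynomial, so plane partitions with at most `m` columns and `n` rows
are counted by `∑_μ s_μ(Qq, Qq², …, Qqᵐ) s_μ(1, q, …, qⁿ⁻¹)`, where `Q` marks the main diagonal.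
The Cauchy identity evaluates this to `∏_{i < m} ∏_{j < n} (1 - Q q^{i+j+1})⁻¹`, and the result
follows on letting the box grow, since `i + j = n` has `n + 1` solutions.

The Cauchy identity is obtained by adding variables one at a time; the single-variable step is a
bijection between the partitions interlacing two given ones from inside, together with a natural
number, and those interlacing them from outside. All generating functions take values in `ℝ≥0∞`,
so that no rearrangement of sums needs a convergence argument.
-/

open Filter Topology
open scoped ENNReal

theorem cast_finsum_eq_tsum {α : Type*} {f : α → ℕ} (hf : f.support.Finite) :
    ((∑ᶠ a, f a : ℕ) : ℝ≥0∞) = ∑' a, (f a : ℝ≥0∞) := by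
  rw [finsum_eq_sum f hf, tsum_eq_sum (s := hf.toFinset) fun a ha => by simpa using ha]
  exact Nat.cast_sum _ _

/-! ### Interlacing partitions -/

/-- An integer partition, encoded as a weakly decreasing sequence of parts, padded by zeros. -/
@[ext]
structure IntPartition where
  part : ℕ → ℕ
  succ_le : ∀ i, part (i + 1) ≤ part i
  eventually_zero : ∀ᶠ i in atTop, part i = 0

namespace IntPartition

instance : Zero IntPartition := ⟨⟨fun _ => 0, fun _ => le_rfl, .of_forall fun _ => rfl⟩⟩

@[simp]
theorem zero_part (i : ℕ) : (0 : IntPartition).part i = 0 := rfl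

/-- The size `|μ|` of a partition: the sum of its parts. -/
noncomputable def size (μ : IntPartition) : ℕ := ∑ᶠ i, μ.part i

@[simp]
theorem size_zero : (0 : IntPartition).size = 0 := by simp [size]

theorem cast_size (μ : IntPartition) : (μ.size : ℝ≥0∞) = ∑' i, (μ.part i : ℝ≥0∞) :=
  cast_finsum_eq_tsum <| by
    simpa only [← Nat.cofinite_eq_atTop, eventually_cofinite] using! μ.eventually_zero

/-- `μ.Interlaces ν` is the relation `μ ≺ ν`, that is `ν₀ ≥ μ₀ ≥ ν₁ ≥ μ₁ ≥ ⋯`; equivalently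
`ν / μ` is a horizontal strip. -/
def Interlaces (μ ν : IntPartition) : Prop :=
  ∀ i, μ.part i ≤ ν.part i ∧ ν.part (i + 1) ≤ μ.part i

theorem Interlaces.size_le {μ ν : IntPartition} (h : μ.Interlaces ν) : μ.size ≤ ν.size := by
  rw [← Nat.cast_le (α := ℝ≥0∞), cast_size, cast_size]
  exact ENNReal.tsum_le_tsum fun i => Nat.cast_le.2 (h i).1

theorem interlaces_zero_iff {μ : IntPartition} : μ.Interlaces 0 ↔ μ = 0 := by
  refine ⟨fun h => ?_, ?_⟩
  · ext i
    simpa using (h i).1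
  · rintro rfl i
    simp

section Toggle

variable (ρ σ : IntPartition)

/-- The partitions `τ` with `τ ≺ ρ` and `τ ≺ σ`. -/
def commonInner : Set IntPartition := {τ | τ.Interlaces ρ ∧ τ.Interlaces σ}

/-- The partitions `ν` with `ρ ≺ ν` and `σ ≺ ν`. -/
def commonOuter : Set IntPartition := {ν | ρ.Interlaces ν ∧ σ.Interlaces ν}

variable {ρ σ}

theorem mem_commonInner_iff {τ : IntPartition} : τ ∈ commonInner ρ σ ↔
    ∀ i, max (ρ.part (i + 1)) (σ.part (i + 1)) ≤ τ.part i ∧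
      τ.part i ≤ min (ρ.part i) (σ.part i) := by
  simp only [commonInner, Interlaces, Set.mem_ofPred_eq, ← forall_and]
  exact forall_congr' fun i => by omega

theorem mem_commonOuter_iff {ν : IntPartition} : ν ∈ commonOuter ρ σ ↔
    max (ρ.part 0) (σ.part 0) ≤ ν.part 0 ∧
      ∀ i, max (ρ.part (i + 1)) (σ.part (i + 1)) ≤ ν.part (i + 1) ∧
        ν.part (i + 1) ≤ min (ρ.part i) (σ.part i) := by
  simp only [commonOuter, Interlaces, Set.mem_ofPred_eq]
  constructor
  · rintro ⟨hρ, hσ⟩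
    refine ⟨max_le (hρ 0).1 (hσ 0).1, fun i => ?_⟩
    have := hρ i; have := hσ i; have := hρ (i + 1); have := hσ (i + 1)
    omega
  · rintro ⟨h_zero, h_succ⟩
    refine ⟨fun i => ?_, fun i => ?_⟩ <;> have := h_succ i <;> cases i with
    | zero => omega
    | succ i => have := h_succ i; omega

/-- Reflects each part of `τ` in the interval `[max ρᵢ₊₁ σᵢ₊₁, min ρᵢ σᵢ]` in which it varies.
The result becomes part `i + 1`, and the new part `0`, which is only bounded below,
exceeds `max ρ₀ σ₀` by `e`. -/
def toggleOut {τ : IntPartition} (hτ : τ ∈ commonInner ρ σ) (e : ℕ) : IntPartition where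
  part
    | 0 => max (ρ.part 0) (σ.part 0) + e
    | i + 1 => min (ρ.part i) (σ.part i) + max (ρ.part (i + 1)) (σ.part (i + 1)) - τ.part i
  succ_le i := by
    have hτ := mem_commonInner_iff.1 hτ
    cases i with
    | zero => have := hτ 0; dsimp only; omega
    | succ i => have := hτ i; have := hτ (i + 1); dsimp only; omega
  eventually_zero := by
    rw [← map_add_atTop_eq_nat 1, eventually_map]
    filter_upwards [ρ.eventually_zero, σ.eventually_zero] with i hρ hσ
    have := ρ.succ_le i; have := σ.succ_le i
    omega

theorem toggleOut_mem_commonOuter {τ : IntPartition} (hτ : τ ∈ commonInner ρ σ) (e : ℕ) :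
    toggleOut hτ e ∈ commonOuter ρ σ :=
  mem_commonOuter_iff.2 ⟨Nat.le_add_right _ _, fun i => by
    have := mem_commonInner_iff.1 hτ i
    dsimp only [toggleOut]
    omega⟩

/-- The reflection inverse to `toggleOut`; it forgets part `0` of `ν`. -/
def toggleIn {ν : IntPartition} (hν : ν ∈ commonOuter ρ σ) : IntPartition where
  part i := min (ρ.part i) (σ.part i) + max (ρ.part (i + 1)) (σ.part (i + 1)) - ν.part (i + 1)
  succ_le i := by
    have hν := (mem_commonOuter_iff.1 hν).2
    have := hν i; have := hν (i + 1)
    omega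
  eventually_zero := by
    filter_upwards [ρ.eventually_zero, σ.eventually_zero] with i hρ hσ
    have := ρ.succ_le i; have := σ.succ_le i
    omega

theorem toggleIn_mem_commonInner {ν : IntPartition} (hν : ν ∈ commonOuter ρ σ) :
    toggleIn hν ∈ commonInner ρ σ :=
  mem_commonInner_iff.2 fun i => by
    have := (mem_commonOuter_iff.1 hν).2 i
    dsimp only [toggleIn]
    omega

variable (ρ σ) in
/-- The local bijection behind the skew Cauchy identity. -/
def toggleEquiv : commonInner ρ σ × ℕ ≃ commonOuter ρ σ where
  toFun p := ⟨toggleOut p.1.2 p.2, toggleOut_mem_commonOuter p.1.2 p.2⟩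
  invFun ν := ⟨⟨toggleIn ν.2, toggleIn_mem_commonInner ν.2⟩,
    ν.1.part 0 - max (ρ.part 0) (σ.part 0)⟩
  left_inv := by
    rintro ⟨⟨τ, hτ⟩, e⟩
    ext i
    · have := mem_commonInner_iff.1 hτ i
      dsimp only [toggleIn, toggleOut]
      omega
    · exact Nat.add_sub_cancel_left ..
  right_inv := by
    rintro ⟨ν, hν⟩
    obtain ⟨h_zero, h_succ⟩ := mem_commonOuter_iff.1 hν
    ext i
    cases i with
    | zero => exact Nat.add_sub_cancel' h_zero
    | succ i =>
      have := h_succ i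
      dsimp only [toggleIn, toggleOut]
      omega

theorem size_toggleOut_add_size {τ : IntPartition} (hτ : τ ∈ commonInner ρ σ) (e : ℕ) :
    (toggleOut hτ e).size + τ.size = ρ.size + σ.size + e := by
  have reflect (i : ℕ) : (toggleOut hτ e).part (i + 1) + τ.part i =
      min (ρ.part i) (σ.part i) + max (ρ.part (i + 1)) (σ.part (i + 1)) := by
    have := mem_commonInner_iff.1 hτ i
    dsimp only [toggleOut]
    omega
  rw [← Nat.cast_inj (R := ℝ≥0∞)]
  calc (((toggleOut hτ e).size + τ.size : ℕ) : ℝ≥0∞)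
    _ = ((max (ρ.part 0) (σ.part 0) + e : ℕ) : ℝ≥0∞) +
          ∑' i, (((toggleOut hτ e).part (i + 1) + τ.part i : ℕ) : ℝ≥0∞) := by
        push_cast [cast_size]
        rw [tsum_eq_zero_add' ENNReal.summable, add_assoc, ENNReal.tsum_add]
        simp [toggleOut]
    _ = e + ∑' i, ((min (ρ.part i) (σ.part i) + max (ρ.part i) (σ.part i) : ℕ) : ℝ≥0∞) := by
        simp only [reflect, Nat.cast_add, ENNReal.tsum_add]
        rw [tsum_eq_zero_add' (f := fun i => ((max (ρ.part i) (σ.part i) : ℕ) : ℝ≥0∞))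
          ENNReal.summable]
        ring
    _ = ((ρ.size + σ.size + e : ℕ) : ℝ≥0∞) := by
        push_cast [min_add_max, cast_size, ENNReal.tsum_add]
        rw [add_comm]

end Toggle

/-- The skew Schur function `s_{ν/μ}(x)` in a single variable: a horizontal strip contributes
`x ^ |ν / μ|`, any other skew shape contributes nothing. -/
noncomputable def skewSchur (x : ℝ≥0∞) (μ ν : IntPartition) : ℝ≥0∞ :=
  open Classical in if μ.Interlaces ν then x ^ (ν.size - μ.size) else 0

theorem tsum_skewSchur_mul_skewSchur_outer (x y : ℝ≥0∞) (ρ σ : IntPartition) :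
    ∑' ν, skewSchur x ρ ν * skewSchur y σ ν =
      ∑' ν : commonOuter ρ σ, x ^ (ν.1.size - ρ.size) * y ^ (ν.1.size - σ.size) := by
  rw [tsum_subtype (commonOuter ρ σ) fun ν => x ^ (ν.size - ρ.size) * y ^ (ν.size - σ.size)]
  refine tsum_congr fun ν => ?_
  by_cases hρ : ρ.Interlaces ν <;> by_cases hσ : σ.Interlaces ν <;>
    simp [skewSchur, commonOuter, hρ, hσ]

theorem tsum_skewSchur_mul_skewSchur_inner (x y : ℝ≥0∞) (ρ σ : IntPartition) :
    ∑' τ, skewSchur y τ ρ * skewSchur x τ σ =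
      ∑' τ : commonInner ρ σ, y ^ (ρ.size - τ.1.size) * x ^ (σ.size - τ.1.size) := by
  rw [tsum_subtype (commonInner ρ σ) fun τ => y ^ (ρ.size - τ.size) * x ^ (σ.size - τ.size)]
  refine tsum_congr fun τ => ?_
  by_cases hρ : τ.Interlaces ρ <;> by_cases hσ : τ.Interlaces σ <;>
    simp [skewSchur, commonInner, hρ, hσ]

theorem skew_cauchy (x y : ℝ≥0∞) (ρ σ : IntPartition) :
    ∑' ν, skewSchur x ρ ν * skewSchur y σ ν =
      (1 - x * y)⁻¹ * ∑' τ, skewSchur y τ ρ * skewSchur x τ σ := by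
  rw [tsum_skewSchur_mul_skewSchur_outer, tsum_skewSchur_mul_skewSchur_inner,
    ← (toggleEquiv ρ σ).tsum_eq, ENNReal.tsum_prod', ← ENNReal.tsum_mul_left]
  refine tsum_congr fun ⟨τ, hτ⟩ => ?_
  rw [← ENNReal.tsum_geometric, ← ENNReal.tsum_mul_right]
  refine tsum_congr fun e => ?_
  have h_size := size_toggleOut_add_size hτ e
  have hρ := hτ.1.size_le
  have hσ := hτ.2.size_le
  have h_outer_ρ : (toggleOut hτ e).size - ρ.size = e + (σ.size - τ.size) := by omega
  have h_outer_σ : (toggleOut hτ e).size - σ.size = e + (ρ.size - τ.size) := by omega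
  simp only [toggleEquiv, Equiv.coe_fn_mk, h_outer_ρ, h_outer_σ]
  ring

end IntPartition

open IntPartition

/-! ### Schur polynomials -/

/-- A chain `μ = μ⁰ ≻ μ¹ ≻ ⋯` of interlacing partitions with `μᵐ = 0` (so that all later terms
vanish): a Gelfand–Tsetlin pattern with top row `μ`. -/
@[ext]
structure InterlacingChain (m : ℕ) (μ : IntPartition) where
  seq : ℕ → IntPartition
  seq_zero : seq 0 = μ
  interlaces : ∀ k, (seq (k + 1)).Interlaces (seq k)
  seq_length : seq m = 0

namespace InterlacingChain

variable {m : ℕ} {μ : IntPartition}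

theorem seq_eq_zero (c : InterlacingChain m μ) {k : ℕ} (hk : m ≤ k) : c.seq k = 0 := by
  induction k, hk using Nat.le_induction with
  | base => exact c.seq_length
  | succ k _ ih => exact interlaces_zero_iff.1 (ih ▸ c.interlaces k)

theorem seq_part_le (c : InterlacingChain m μ) (k i : ℕ) : (c.seq k).part i ≤ μ.part i := by
  induction k with
  | zero => rw [c.seq_zero]
  | succ k ih => exact (c.interlaces k i).1.trans ih

theorem antitone_size (c : InterlacingChain m μ) : Antitone fun k => (c.seq k).size :=
  antitone_nat_of_succ_le fun k => (c.interlaces k).size_le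

theorem isEmpty_zero (hμ : μ ≠ 0) : IsEmpty (InterlacingChain 0 μ) :=
  ⟨fun c => hμ (c.seq_zero.symm.trans c.seq_length)⟩

instance : Unique (InterlacingChain 0 0) where
  default := ⟨fun _ => 0, rfl, fun _ => interlaces_zero_iff.2 rfl, rfl⟩
  uniq c := InterlacingChain.ext <| funext fun k => c.seq_eq_zero k.zero_le

/-- Removing the top row of a chain leaves a chain whose top row interlaces it. -/
def succEquiv (m : ℕ) (μ : IntPartition) :
    InterlacingChain (m + 1) μ ≃ Σ ν : {ν : IntPartition | ν.Interlaces μ},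
      InterlacingChain m ν.1 where
  toFun c := ⟨⟨c.seq 1, by simpa [c.seq_zero] using c.interlaces 0⟩,
    ⟨fun k => c.seq (k + 1), rfl, fun k => c.interlaces (k + 1), c.seq_length⟩⟩
  invFun p :=
    { seq := fun | 0 => μ | k + 1 => p.2.seq k
      seq_zero := rfl
      interlaces := fun
        | 0 => by simpa only [p.2.seq_zero] using! p.1.2
        | k + 1 => p.2.interlaces k
      seq_length := p.2.seq_length }
  left_inv c := by
    ext1
    funext k
    cases k with
    | zero => exact c.seq_zero.symm
    | succ k => rfl
  right_inv := by
    rintro ⟨⟨ν, hν⟩, ⟨seq, h_zero, h_interlaces, h_length⟩⟩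
    obtain rfl : seq 0 = ν := h_zero
    rfl

end InterlacingChain

/-- The Schur polynomial `s_μ(x₀, …, x_{m-1})`, as a sum over Gelfand–Tsetlin patterns. -/
noncomputable def schur (x : ℕ → ℝ≥0∞) (m : ℕ) (μ : IntPartition) : ℝ≥0∞ :=
  ∑' c : InterlacingChain m μ,
    ∏ k ∈ Finset.range m, x k ^ ((c.seq k).size - (c.seq (k + 1)).size)

section Schur

variable (x y : ℕ → ℝ≥0∞) (m n : ℕ)

theorem schur_zero_zero : schur x 0 0 = 1 := by
  simp [schur]

theorem schur_zero_of_ne {μ : IntPartition} (hμ : μ ≠ 0) : schur x 0 μ = 0 := by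
  have := InterlacingChain.isEmpty_zero hμ
  simp [schur]

theorem schur_succ (μ : IntPartition) :
    schur x (m + 1) μ = ∑' ν, skewSchur (x 0) ν μ * schur (fun k => x (k + 1)) m ν := by
  have h_indicator (ν : IntPartition) :
      skewSchur (x 0) ν μ * schur (fun k => x (k + 1)) m ν =
        {ν : IntPartition | ν.Interlaces μ}.indicator (fun ν =>
          x 0 ^ (μ.size - ν.size) * schur (fun k => x (k + 1)) m ν) ν := by
    by_cases hν : ν.Interlaces μ <;> simp [skewSchur, hν]
  simp only [h_indicator]
  rw [← tsum_subtype, schur, ← (InterlacingChain.succEquiv m μ).symm.tsum_eq, ENNReal.tsum_sigma']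
  refine tsum_congr fun ν => ?_
  rw [schur, ← ENNReal.tsum_mul_left]
  refine tsum_congr fun c => ?_
  rw [Finset.prod_range_succ', mul_comm]
  simp [InterlacingChain.succEquiv, c.seq_zero]

@[simp]
theorem schur_zero_right : schur x m 0 = 1 := by
  induction m generalizing x with
  | zero => exact schur_zero_zero x
  | succ m ih =>
    rw [schur_succ, tsum_eq_single 0 fun ν hν => by simp [skewSchur, interlaces_zero_iff, hν]]
    simp [skewSchur, interlaces_zero_iff, ih]

theorem tsum_skewSchur_mul_schur (t : ℝ≥0∞) (μ : IntPartition) :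
    ∑' ν, skewSchur t μ ν * schur x m ν =
      (∏ i ∈ Finset.range m, (1 - t * x i)⁻¹) * schur x m μ := by
  induction m generalizing x μ with
  | zero =>
    rw [tsum_eq_single 0 fun ν hν => by simp [schur_zero_of_ne x hν]]
    by_cases hμ : μ = 0
    · simp [hμ, skewSchur, interlaces_zero_iff]
    · simp [hμ, skewSchur, interlaces_zero_iff, schur_zero_of_ne]
  | succ m ih =>
    let x' (k : ℕ) : ℝ≥0∞ := x (k + 1)
    calc ∑' ν, skewSchur t μ ν * schur x (m + 1) ν
      _ = ∑' σ, (∑' ν, skewSchur t μ ν * skewSchur (x 0) σ ν) * schur x' m σ := by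
        simp only [schur_succ, ← ENNReal.tsum_mul_left, ← ENNReal.tsum_mul_right, mul_assoc]
        exact ENNReal.tsum_comm
      _ = (1 - t * x 0)⁻¹ *
            ∑' τ, skewSchur (x 0) τ μ * ∑' σ, skewSchur t τ σ * schur x' m σ := by
        simp only [skew_cauchy, mul_assoc, ENNReal.tsum_mul_left, ← ENNReal.tsum_mul_right]
        rw [ENNReal.tsum_comm]
        simp only [ENNReal.tsum_mul_left]
      _ = (∏ i ∈ Finset.range (m + 1), (1 - t * x i)⁻¹) * schur x (m + 1) μ := by
        simp only [ih, schur_succ, Finset.prod_range_succ', mul_left_comm (skewSchur _ _ _),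
          ENNReal.tsum_mul_left, x']
        ring

theorem tsum_schur_mul_schur :
    ∑' μ, schur x m μ * schur y n μ =
      ∏ i ∈ Finset.range m, ∏ j ∈ Finset.range n, (1 - x i * y j)⁻¹ := by
  induction m generalizing x with
  | zero =>
    rw [tsum_eq_single 0 fun μ hμ => by simp [schur_zero_of_ne x hμ]]
    simp
  | succ m ih =>
    let x' (k : ℕ) : ℝ≥0∞ := x (k + 1)
    calc ∑' μ, schur x (m + 1) μ * schur y n μ
      _ = ∑' ν, schur x' m ν * ∑' μ, skewSchur (x 0) ν μ * schur y n μ := by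
        simp only [schur_succ, ← ENNReal.tsum_mul_left, ← ENNReal.tsum_mul_right]
        rw [ENNReal.tsum_comm]
        refine tsum_congr fun ν => tsum_congr fun μ => ?_
        ring
      _ = (∏ j ∈ Finset.range n, (1 - x 0 * y j)⁻¹) * ∑' ν, schur x' m ν * schur y n ν := by
        simp only [tsum_skewSchur_mul_schur, mul_left_comm (schur x' m _), ENNReal.tsum_mul_left]
      _ = ∏ i ∈ Finset.range (m + 1), ∏ j ∈ Finset.range n, (1 - x i * y j)⁻¹ := by
        rw [ih, Finset.prod_range_succ', mul_comm]

theorem prod_mul_pow_pow_sub {M : Type*} [CommMonoid M] (a q : M) {s : ℕ → ℕ} (hs : Antitone s)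
    {m : ℕ} (hm : s m = 0) :
    ∏ k ∈ Finset.range m, (a * q ^ k) ^ (s k - s (k + 1)) =
      a ^ s 0 * q ^ ∑ k ∈ Finset.range m, s (k + 1) := by
  induction m generalizing a s with
  | zero => simp [hm]
  | succ m ih =>
    have ih := ih (a * q) (s := fun k => s (k + 1)) (fun _ _ h => hs (by omega)) hm
    have h_zero : a ^ s 0 = a ^ s 1 * a ^ (s 0 - s 1) := by
      rw [← pow_add, Nat.add_sub_cancel' (hs zero_le_one)]
    simp only [mul_assoc, ← pow_succ'] at ih
    rw [Finset.prod_range_succ', ih, Finset.sum_range_succ', h_zero, pow_add, mul_pow]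
    simp only [pow_zero, mul_one, zero_add]
    ac_rfl

theorem schur_geometric (a q : ℝ≥0∞) (m : ℕ) (μ : IntPartition) :
    schur (fun k => a * q ^ k) m μ =
      ∑' c : InterlacingChain m μ,
        a ^ μ.size * q ^ ∑ k ∈ Finset.range m, (c.seq (k + 1)).size := by
  refine tsum_congr fun c => ?_
  rw [prod_mul_pow_pow_sub a q c.antitone_size (by simp [c.seq_length]), c.seq_zero]

end Schur

/-! ### Sums and products over the quadrant -/

/-- The quadrant as the disjoint union of the main diagonal and the diagonals above and below. -/
def quadrantEquiv : ℕ ⊕ (ℕ × ℕ) ⊕ (ℕ × ℕ) ≃ ℕ × ℕ where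
  toFun
    | .inl i => (i, i)
    | .inr (.inl (k, i)) => (i, i + (k + 1))
    | .inr (.inr (k, i)) => (i + (k + 1), i)
  invFun p :=
    if p.1 = p.2 then .inl p.1
    else if p.1 < p.2 then .inr (.inl (p.2 - p.1 - 1, p.1))
    else .inr (.inr (p.1 - p.2 - 1, p.2))
  left_inv := by
    rintro (i | ⟨k, i⟩ | ⟨k, i⟩) <;> simp
  right_inv := by
    rintro ⟨i, j⟩
    rcases lt_trichotomy i j with h | h | h
    · simp only [h.ne, if_false, h, if_true, Prod.mk.injEq, true_and]
      omega
    · simp [h]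
    · simp only [h.ne', h.not_gt, if_false, Prod.mk.injEq, and_true]
      omega

theorem tsum_prod_eq_tsum_diagonals (f : ℕ → ℕ → ℝ≥0∞) :
    ∑' p : ℕ × ℕ, f p.1 p.2 =
      ∑' i, f i i + (∑' k, ∑' i, f i (i + (k + 1)) + ∑' k, ∑' i, f (i + (k + 1)) i) := by
  rw [← quadrantEquiv.tsum_eq, Summable.tsum_sum ENNReal.summable ENNReal.summable,
    Summable.tsum_sum ENNReal.summable ENNReal.summable, ENNReal.tsum_prod', ENNReal.tsum_prod']
  rfl

theorem tendsto_tsum_of_monotone_of_iUnion_eq_univ {α : Type*} (f : α → ℝ≥0∞) {s : ℕ → Set α}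
    (hs : Monotone s) (hs_univ : ⋃ N, s N = Set.univ) :
    Tendsto (fun N => ∑' a : s N, f a) atTop (𝓝 (∑' a, f a)) := by
  refine tendsto_order.2 ⟨fun b hb => ?_, fun b hb => .of_forall fun N =>
    (ENNReal.tsum_comp_le_tsum_of_injective Subtype.val_injective f).trans_lt hb⟩
  rw [ENNReal.tsum_eq_iSup_sum] at hb
  obtain ⟨t, ht⟩ := lt_iSup_iff.1 hb
  obtain ⟨N, hN⟩ := hs.directed_le.exists_mem_subset_of_finset_subset_biUnion
    (s := t) (by simp [hs_univ])
  filter_upwards [eventually_ge_atTop N] with N' hN'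
  calc b < ∑ a ∈ t, f a := ht
    _ = ∑' a : t, f a := (t.tsum_subtype f).symm
    _ ≤ ∑' a : s N', f a := ENNReal.tsum_mono_subtype f (hN.trans (hs hN'))

theorem hasSum_of_tsum_ofReal_eq {α : Type*} {f : α → ℝ} {a : ℝ} (hf : ∀ i, 0 ≤ f i) (ha : 0 ≤ a)
    (h : ∑' i, ENNReal.ofReal (f i) = ENNReal.ofReal a) : HasSum f a := by
  have h_sum := ENNReal.hasSum_toReal (h.trans_ne ENNReal.ofReal_ne_top)
  rw [← ENNReal.tsum_toReal_eq fun _ => ENNReal.ofReal_ne_top, h, ENNReal.toReal_ofReal ha] at h_sum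
  simpa only [ENNReal.toReal_ofReal (hf _)] using h_sum

section Antidiagonal

variable {M : Type*} [CommMonoid M] [TopologicalSpace M]

theorem tendsto_prod_range_prod_range {f : ℕ × ℕ → M} {a : M} (h : HasProd f a) :
    Tendsto (fun N => ∏ i ∈ Finset.range N, ∏ j ∈ Finset.range N, f (i, j)) atTop (𝓝 a) := by
  simp only [← Finset.prod_product']
  have h_square : Tendsto (fun N => Finset.range N ×ˢ Finset.range N) atTop atTop :=
    tendsto_atTop_finset_of_monotone
      (fun _ _ h => Finset.product_subset_product (Finset.range_mono h) (Finset.range_mono h))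
      fun p => ⟨max p.1 p.2 + 1, by simp⟩
  rw [HasProd, SummationFilter.unconditional_filter] at h
  exact h.comp h_square

theorem hasProd_pow_of_hasProd_add [ContinuousMul M] [RegularSpace M] {f : ℕ → M} {a : M}
    (h : HasProd (fun p : ℕ × ℕ => f (p.1 + p.2)) a) : HasProd (fun n => f n ^ (n + 1)) a := by
  rw [← Finset.HasAntidiagonal.sigmaAntidiagonalEquivProd.hasProd_iff] at h
  refine h.sigma fun n => ?_
  have h_prod : ∏ p ∈ Finset.HasAntidiagonal.antidiagonal n, f (p.1 + p.2) = f n ^ (n + 1) := by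
    rw [← Finset.Nat.card_antidiagonal n]
    exact Finset.prod_eq_pow_card fun p hp => by rw [Finset.HasAntidiagonal.mem_antidiagonal.1 hp]
  exact h_prod ▸ (Finset.HasAntidiagonal.antidiagonal n).hasProd fun p : ℕ × ℕ => f (p.1 + p.2)

end Antidiagonal

/-! ### Plane partitions and their diagonals -/

namespace InterlacingChain

variable {m n : ℕ} {μ : IntPartition}

theorem ext_pair {p p' : Σ μ, InterlacingChain m μ × InterlacingChain n μ}
    (h_fst : p.2.1.seq = p'.2.1.seq) (h_snd : p.2.2.seq = p'.2.2.seq) : p = p' := by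
  obtain ⟨_, ⟨c, rfl, _, _⟩, ⟨d, _, _, _⟩⟩ := p
  obtain ⟨_, ⟨c', rfl, _, _⟩, ⟨d', _, _, _⟩⟩ := p'
  obtain rfl : c = c' := h_fst
  obtain rfl : d = d' := h_snd
  rfl

/-- The array whose `k`-th diagonals above and below the main diagonal are `c.seq k` and
`d.seq k`. -/
def glue (c : InterlacingChain m μ) (d : InterlacingChain n μ) (i j : ℕ) : ℕ :=
  if i ≤ j then (c.seq (j - i)).part i else (d.seq (i - j)).part j

variable (c : InterlacingChain m μ) (d : InterlacingChain n μ)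

theorem glue_add_right (i k : ℕ) : glue c d i (i + k) = (c.seq k).part i := by
  simp [glue]

theorem glue_add_left (i k : ℕ) : glue c d (i + k) i = (d.seq k).part i := by
  obtain rfl | hk := k.eq_zero_or_pos
  · simp [glue, c.seq_zero, d.seq_zero]
  · simp [glue, hk.ne']

theorem glue_swap (i j : ℕ) : glue c d i j = glue d c j i := by
  obtain ⟨k, rfl⟩ | ⟨k, rfl⟩ := (le_total i j).imp Nat.exists_eq_add_of_le Nat.exists_eq_add_of_le
  · rw [glue_add_right, glue_add_left]
  · rw [glue_add_right, glue_add_left]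

theorem glue_succ_right_le (i j : ℕ) : glue c d i (j + 1) ≤ glue c d i j := by
  obtain ⟨k, rfl⟩ | ⟨k, rfl⟩ := (le_or_gt i j).imp Nat.exists_eq_add_of_le Nat.exists_eq_add_of_le
  · rw [add_assoc, glue_add_right, glue_add_right]
    exact (c.interlaces k i).1
  · rw [glue_add_left, Nat.succ_add_eq_add_succ, glue_add_left]
    exact (d.interlaces k j).2

theorem glue_eq_zero {N : ℕ} (hN : ∀ i, N ≤ i → μ.part i = 0) {i j : ℕ} (hj : N + m ≤ j) :
    glue c d i j = 0 := by
  obtain ⟨k, rfl⟩ | ⟨k, rfl⟩ := (le_total i j).imp Nat.exists_eq_add_of_le Nat.exists_eq_add_of_le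
  · rw [glue_add_right]
    rcases le_or_gt m k with hk | hk
    · rw [c.seq_eq_zero hk, zero_part]
    · exact Nat.eq_zero_of_le_zero (hN i (by omega) ▸ c.seq_part_le k i)
  · rw [glue_add_left]
    exact Nat.eq_zero_of_le_zero (hN j (by omega) ▸ d.seq_part_le k j)

/-- The plane partition with diagonals `c` and `d`. -/
def toPlanePartition : PlanePartition where
  part := glue c d
  row_antitone i j := by
    rw [glue_swap, glue_swap c]
    exact glue_succ_right_le d c j i
  col_antitone := glue_succ_right_le c d
  support_finite := by
    obtain ⟨N, hN⟩ := eventually_atTop.1 μ.eventually_zero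
    refine (Set.finite_Iio (N + n) |>.prod <| Set.finite_Iio (N + m)).subset ?_
    rintro ⟨i, j⟩ hij
    constructor <;> refine Set.mem_Iio.2 (lt_of_not_ge fun h => hij ?_)
    · exact (glue_swap c d i j).trans (glue_eq_zero d c hN h)
    · exact glue_eq_zero c d hN h

end InterlacingChain

namespace PlanePartition

theorem ext_part {π ρ : PlanePartition} (h : π.part = ρ.part) : π = ρ := by
  cases π
  cases ρ
  congr

/-- The reflection of a plane partition in its main diagonal. -/
def transpose (π : PlanePartition) : PlanePartition where
  part i j := π.part j i
  row_antitone i j := π.col_antitone j i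
  col_antitone i j := π.row_antitone j i
  support_finite := π.support_finite.preimage Prod.swap_injective.injOn

theorem part_antitone_left (π : PlanePartition) (j : ℕ) : Antitone fun i => π.part i j :=
  antitone_nat_of_succ_le fun i => π.row_antitone i j

theorem part_antitone_right (π : PlanePartition) (i : ℕ) : Antitone fun j => π.part i j :=
  antitone_nat_of_succ_le fun j => π.col_antitone i j

theorem part_eq_zero_of_le {π : PlanePartition} {m : ℕ} (hm : π.part 0 m = 0) {j : ℕ}
    (hj : m ≤ j) (i : ℕ) : π.part i j = 0 :=
  Nat.eq_zero_of_le_zero <| calc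
    π.part i j ≤ π.part 0 j := π.part_antitone_left j i.zero_le
    _ ≤ π.part 0 m := π.part_antitone_right 0 hj
    _ = 0 := hm

theorem eventually_part_zero_eq_zero (π : PlanePartition) : ∀ᶠ j in atTop, π.part 0 j = 0 := by
  rw [← Nat.cofinite_eq_atTop, eventually_cofinite]
  exact π.support_finite.preimage (Prod.mk_right_injective 0).injOn

/-- The `k`-th diagonal above the main diagonal; the diagonals below it are those of
`π.transpose`. -/
def diagonal (π : PlanePartition) (k : ℕ) : IntPartition where
  part i := π.part i (i + k)
  succ_le i := (π.row_antitone i _).trans (π.part_antitone_right i (by omega))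
  eventually_zero := π.eventually_part_zero_eq_zero.mono fun i hi =>
    part_eq_zero_of_le hi (Nat.le_add_right i k) i

theorem diagonal_interlaces (π : PlanePartition) (k : ℕ) :
    (π.diagonal (k + 1)).Interlaces (π.diagonal k) := fun i => by
  refine ⟨π.col_antitone i (i + k), ?_⟩
  simpa only [diagonal, Nat.add_right_comm i 1 k] using! π.row_antitone i (i + 1 + k)

theorem diagonal_eq_zero {π : PlanePartition} {m : ℕ} (hm : π.part 0 m = 0) {k : ℕ}
    (hk : m ≤ k) : π.diagonal k = 0 :=
  IntPartition.ext <| funext fun i => part_eq_zero_of_le hm (by omega) i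

/-- The diagonals of a plane partition with at most `m` columns. -/
def diagonalChain (π : PlanePartition) {m : ℕ} (hm : π.part 0 m = 0) :
    InterlacingChain m (π.diagonal 0) where
  seq := π.diagonal
  seq_zero := rfl
  interlaces := π.diagonal_interlaces
  seq_length := diagonal_eq_zero hm le_rfl

/-- The plane partitions with at most `m` columns and at most `n` rows. -/
def box (m n : ℕ) : Set PlanePartition := {π | π.part 0 m = 0 ∧ π.part n 0 = 0}

theorem toPlanePartition_mem_box {m n : ℕ} {μ : IntPartition} (c : InterlacingChain m μ)
    (d : InterlacingChain n μ) : c.toPlanePartition d ∈ box m n := by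
  constructor
  · simpa [c.seq_length] using! c.glue_add_right d 0 m
  · simpa [d.seq_length] using! c.glue_add_left d 0 n

/-- A plane partition is determined by its diagonals, read outwards from the main one. -/
def boxEquiv (m n : ℕ) : box m n ≃ Σ μ, InterlacingChain m μ × InterlacingChain n μ where
  toFun π := ⟨π.1.diagonal 0, π.1.diagonalChain π.2.1,
    π.1.transpose.diagonalChain (m := n) π.2.2⟩
  invFun p := ⟨p.2.1.toPlanePartition p.2.2, toPlanePartition_mem_box p.2.1 p.2.2⟩
  left_inv := by
    rintro ⟨π, hπ⟩
    refine Subtype.ext (ext_part ?_)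
    funext i j
    obtain ⟨k, rfl⟩ | ⟨k, rfl⟩ :=
      (le_total i j).imp Nat.exists_eq_add_of_le Nat.exists_eq_add_of_le
    · exact InterlacingChain.glue_add_right ..
    · exact InterlacingChain.glue_add_left ..
  right_inv p := by
    refine InterlacingChain.ext_pair (funext fun k => ?_) (funext fun k => ?_) <;> ext i
    · exact InterlacingChain.glue_add_right ..
    · exact InterlacingChain.glue_add_left ..

theorem size_diagonal_zero (π : PlanePartition) : (π.diagonal 0).size = π.diagSize := rfl

theorem tsum_tsum_part_eq_sum_size {π : PlanePartition} {m : ℕ} (hm : π.part 0 m = 0) :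
    ∑' k, ∑' i, (π.part i (i + (k + 1)) : ℝ≥0∞) =
      ((∑ k ∈ Finset.range m, (π.diagonal (k + 1)).size : ℕ) : ℝ≥0∞) := by
  have h_row (k : ℕ) : ∑' i, (π.part i (i + (k + 1)) : ℝ≥0∞) = (π.diagonal (k + 1)).size :=
    (π.diagonal (k + 1)).cast_size.symm
  simp only [h_row, Nat.cast_sum]
  refine tsum_eq_sum fun k hk => ?_
  have hk : m ≤ k := by simpa using hk
  simp [diagonal_eq_zero hm (Nat.le_succ_of_le hk)]

theorem size_eq_diagSize_add {π : PlanePartition} {m n : ℕ} (hπ : π ∈ box m n) :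
    π.size = π.diagSize + (∑ k ∈ Finset.range m, (π.diagonal (k + 1)).size +
      ∑ k ∈ Finset.range n, (π.transpose.diagonal (k + 1)).size) := by
  have h_diag : ∑' i, (π.part i i : ℝ≥0∞) = π.diagSize := (π.diagonal 0).cast_size.symm
  have h_above := tsum_tsum_part_eq_sum_size hπ.1
  have h_below := tsum_tsum_part_eq_sum_size (π := π.transpose) hπ.2
  rw [← Nat.cast_inj (R := ℝ≥0∞), Nat.cast_add, Nat.cast_add, ← h_diag, ← h_above, ← h_below,
    size, cast_finsum_eq_tsum π.support_finite]
  exact tsum_prod_eq_tsum_diagonals fun i j => (π.part i j : ℝ≥0∞)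

theorem tsum_box (Q q : ℝ≥0∞) (m n : ℕ) :
    ∑' π : box m n, Q ^ π.1.diagSize * q ^ π.1.size =
      ∏ i ∈ Finset.range m, ∏ j ∈ Finset.range n, (1 - Q * q ^ (i + j + 1))⁻¹ := by
  calc ∑' π : box m n, Q ^ π.1.diagSize * q ^ π.1.size
    _ = ∑' π : box m n, ((Q * q) ^ (π.1.diagonal 0).size *
            q ^ ∑ k ∈ Finset.range m, (π.1.diagonal (k + 1)).size) *
          (1 ^ (π.1.diagonal 0).size *
            q ^ ∑ k ∈ Finset.range n, (π.1.transpose.diagonal (k + 1)).size) := by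
      refine tsum_congr fun π => ?_
      rw [size_eq_diagSize_add π.2, size_diagonal_zero]
      ring
    _ = ∑' p : Σ μ, InterlacingChain m μ × InterlacingChain n μ,
          ((Q * q) ^ p.1.size * q ^ ∑ k ∈ Finset.range m, (p.2.1.seq (k + 1)).size) *
            (1 ^ p.1.size * q ^ ∑ k ∈ Finset.range n, (p.2.2.seq (k + 1)).size) :=
      (boxEquiv m n).tsum_eq fun p : Σ μ, InterlacingChain m μ × InterlacingChain n μ =>
        ((Q * q) ^ p.1.size * q ^ ∑ k ∈ Finset.range m, (p.2.1.seq (k + 1)).size) *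
          (1 ^ p.1.size * q ^ ∑ k ∈ Finset.range n, (p.2.2.seq (k + 1)).size)
    _ = ∑' μ, schur (fun i => Q * q * q ^ i) m μ * schur (fun j => 1 * q ^ j) n μ := by
      simp only [ENNReal.tsum_sigma', ENNReal.tsum_prod', ENNReal.tsum_mul_left,
        ENNReal.tsum_mul_right, schur_geometric]
    _ = _ := by
      rw [tsum_schur_mul_schur]
      refine Finset.prod_congr rfl fun i _ => Finset.prod_congr rfl fun j _ => ?_
      ring_nf

theorem monotone_box : Monotone fun N => box N N := fun _ _ hN _ hπ =>
  ⟨part_eq_zero_of_le hπ.1 hN 0, part_eq_zero_of_le (π := transpose _) hπ.2 hN 0⟩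

theorem iUnion_box : ⋃ N, box N N = Set.univ := by
  refine Set.eq_univ_of_forall fun π => ?_
  obtain ⟨N, hN⟩ := (π.eventually_part_zero_eq_zero.and
    π.transpose.eventually_part_zero_eq_zero).exists
  exact Set.mem_iUnion.2 ⟨N, hN⟩

theorem tendsto_box_product (Q q : ℝ≥0∞) :
    Tendsto (fun N => ∏ i ∈ Finset.range N, ∏ j ∈ Finset.range N, (1 - Q * q ^ (i + j + 1))⁻¹)
      atTop (𝓝 (∑' π : PlanePartition, Q ^ π.diagSize * q ^ π.size)) := by
  simpa only [tsum_box] using tendsto_tsum_of_monotone_of_iUnion_eq_univ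
    (fun π : PlanePartition => Q ^ π.diagSize * q ^ π.size) monotone_box iUnion_box

end PlanePartition

/-! ### The MacMahon product -/

section Product

variable {Q q : ℝ}

theorem one_sub_mul_le_one_sub_mul_pow (hQ : 0 ≤ Q) (hq : 0 ≤ q) (hq1 : q < 1) (n : ℕ) :
    1 - Q * q ≤ 1 - Q * q ^ (n + 1) := by
  gcongr
  exact pow_le_of_le_one hq hq1.le n.succ_ne_zero

theorem one_sub_mul_pow_pos (hQ : 0 ≤ Q) (hq : 0 ≤ q) (hq1 : q < 1) (hQq : Q * q < 1) (n : ℕ) :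
    0 < 1 - Q * q ^ (n + 1) :=
  (sub_pos.2 hQq).trans_le (one_sub_mul_le_one_sub_mul_pow hQ hq hq1 n)

theorem ofReal_inv_one_sub_mul_pow (hQ : 0 ≤ Q) (hq : 0 ≤ q) (hq1 : q < 1) (hQq : Q * q < 1)
    (n : ℕ) : ENNReal.ofReal (1 - Q * q ^ (n + 1))⁻¹ =
      (1 - ENNReal.ofReal Q * ENNReal.ofReal q ^ (n + 1))⁻¹ := by
  rw [ENNReal.ofReal_inv_of_pos (one_sub_mul_pow_pos hQ hq hq1 hQq n),
    ENNReal.ofReal_sub _ (by positivity), ENNReal.ofReal_one, ENNReal.ofReal_mul hQ,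
    ENNReal.ofReal_pow hq]

theorem multipliable_inv_one_sub_mul_pow (hQ : 0 ≤ Q) (hq : 0 ≤ q) (hq1 : q < 1)
    (hQq : Q * q < 1) : Multipliable fun p : ℕ × ℕ => (1 - Q * q ^ (p.1 + p.2 + 1))⁻¹ := by
  have h_pos (p : ℕ × ℕ) := one_sub_mul_pow_pos hQ hq hq1 hQq (p.1 + p.2)
  have h_geom : Summable fun p : ℕ × ℕ => q ^ p.1 * q ^ p.2 :=
    (summable_geometric_of_lt_one hq hq1).mul_of_nonneg (summable_geometric_of_lt_one hq hq1)
      (fun _ => by positivity) (fun _ => by positivity)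
  have h_eq (p : ℕ × ℕ) : 1 + Q * q ^ (p.1 + p.2 + 1) * (1 - Q * q ^ (p.1 + p.2 + 1))⁻¹ =
      (1 - Q * q ^ (p.1 + p.2 + 1))⁻¹ := by
    have := (h_pos p).ne'
    field_simp
    ring
  refine (Real.multipliable_one_add_of_summable ?_).congr h_eq
  refine (h_geom.mul_left (Q * q * (1 - Q * q)⁻¹)).of_nonneg_of_le (fun p => ?_) (fun p => ?_)
  · have := h_pos p
    positivity
  · calc Q * q ^ (p.1 + p.2 + 1) * (1 - Q * q ^ (p.1 + p.2 + 1))⁻¹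
      _ ≤ Q * q ^ (p.1 + p.2 + 1) * (1 - Q * q)⁻¹ := by
        gcongr ?_ * ?_
        exact inv_anti₀ (sub_pos.2 hQq) (one_sub_mul_le_one_sub_mul_pow hQ hq hq1 _)
      _ = Q * q * (1 - Q * q)⁻¹ * (q ^ p.1 * q ^ p.2) := by ring

theorem tendsto_prod_inv_one_sub_mul_pow (hQ : 0 ≤ Q) (hq : 0 ≤ q) (hq1 : q < 1)
    (hQq : Q * q < 1) :
    Tendsto (fun N => ∏ i ∈ Finset.range N, ∏ j ∈ Finset.range N, (1 - Q * q ^ (i + j + 1))⁻¹)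
      atTop (𝓝 (∏' n : ℕ, ((1 - Q * q ^ (n + 1))⁻¹) ^ (n + 1))) := by
  have h_quadrant := (multipliable_inv_one_sub_mul_pow hQ hq hq1 hQq).hasProd
  have h_antidiagonal : HasProd (fun n => ((1 - Q * q ^ (n + 1))⁻¹) ^ (n + 1)) _ :=
    hasProd_pow_of_hasProd_add (f := fun n => (1 - Q * q ^ (n + 1))⁻¹) h_quadrant
  rw [h_antidiagonal.tprod_eq]
  simpa only using tendsto_prod_range_prod_range h_quadrant

theorem planePartition_macmahon_general (hQ : 0 ≤ Q) (hq : 0 ≤ q) (hq1 : q < 1)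
    (hQq : Q * q < 1) :
    HasSum (fun π : PlanePartition => Q ^ π.diagSize * q ^ π.size)
      (∏' n : ℕ, ((1 - Q * q ^ (n + 1))⁻¹) ^ (n + 1)) := by
  have h_factor_nonneg (n : ℕ) : 0 ≤ (1 - Q * q ^ (n + 1))⁻¹ :=
    inv_nonneg.2 (one_sub_mul_pow_pos hQ hq hq1 hQq n).le
  have h_real := tendsto_prod_inv_one_sub_mul_pow hQ hq hq1 hQq
  have h_nonneg := ge_of_tendsto' h_real fun N => Finset.prod_nonneg fun i _ =>
    Finset.prod_nonneg fun j _ => h_factor_nonneg (i + j)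
  refine hasSum_of_tsum_ofReal_eq (fun π => by positivity) h_nonneg ?_
  have h_ennreal := ENNReal.tendsto_ofReal h_real
  simp only [ENNReal.ofReal_prod_of_nonneg, Finset.prod_nonneg, h_factor_nonneg, implies_true,
    ofReal_inv_one_sub_mul_pow hQ hq hq1 hQq] at h_ennreal
  rw [tendsto_nhds_unique h_ennreal (PlanePartition.tendsto_box_product _ _)]
  refine tsum_congr fun π => ?_
  rw [ENNReal.ofReal_mul (by positivity), ENNReal.ofReal_pow hQ, ENNReal.ofReal_pow hq]

end Product

/-- MacMahon's formula: the generating function of plane partitions by size is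
`∏_{n ≥ 1} (1 - qⁿ)⁻ⁿ`. -/
theorem planePartition_macmahon (q : ℝ) (hq : q ∈ Set.Ioo (0 : ℝ) 1) :
    ∑' π : PlanePartition, q ^ π.size
      = ∏' n : ℕ, ((1 - q ^ (n + 1))⁻¹) ^ (n + 1) := by
  simpa using
    (planePartition_macmahon_general zero_le_one hq.1.le hq.2 ((one_mul q).trans_lt hq.2)).tsum_eq
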